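/- Let P be a normal logic program and X ∈ {E,A}, and let χ ∈ {HP,EB,EH}. There exists a stableˣ expansion T of τ_χ(P) if and only if there exists a stableˣ expansion T' of τ_χ(gr(P)) such that T'_oga = T_oga. The same holds for τ⁻_HP and stableᴬ expansions. -/

import Mathlib

set_option autoImplicit false

/-! # First-order autoepistemic logic (FO-AEL): syntax -/

structure Sig : Type 1 where
  Func : Type
  Pred : Type
  arF : Func → ℕ
  arP : Pred → ℕ

inductive Term (S : Sig) : Type
  | var : ℕ → Term S
  | func : (f : S.Func) → (Fin (S.arF f) → Term S) → Term S

inductive Formula (S : Sig) : Type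
  | atom : (p : S.Pred) → (Fin (S.arP p) → Term S) → Formula S
  | eq : Term S → Term S → Formula S
  | not : Formula S → Formula S
  | and : Formula S → Formula S → Formula S
  | ex : ℕ → Formula S → Formula S
  | box : Formula S → Formula S

namespace Term

variable {S : Sig}

/-- A term is ground if it contains no variables; ground terms are the *names*. -/
def isGround : Term S → Prop
  | var _ => False
  | func _ ts => ∀ i, (ts i).isGround

def hasVar (x : ℕ) : Term S → Prop
  | var y => y = x
  | func _ ts => ∃ i, (ts i).hasVar x

/-- Application of a partial (name) substitution to a term. -/
def subst (β : ℕ → Option (Term S)) : Term S → Term S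
  | var x => (β x).getD (var x)
  | func f ts => func f (fun i => (ts i).subst β)

/-- The function symbols occurring in a term. -/
def funcs : Term S → Set S.Func
  | var _ => ∅
  | func f ts => insert f (⋃ i, (ts i).funcs)

/-- `t` is a name (ground term) over the set `F` of function symbols. -/
def isNameOf (F : Set S.Func) : Term S → Prop
  | var _ => False
  | func f ts => f ∈ F ∧ ∀ i, (ts i).isNameOf F

end Term

namespace Formula

variable {S : Sig}

/-- A formula is objective if it is 𝖫-free. -/
def isObjective : Formula S → Prop
  | atom _ _ => True
  | eq _ _ => True
  | not φ => φ.isObjective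
  | and φ ψ => φ.isObjective ∧ ψ.isObjective
  | ex _ φ => φ.isObjective
  | box _ => False

def isGround : Formula S → Prop
  | atom _ ts => ∀ i, (ts i).isGround
  | eq t₁ t₂ => t₁.isGround ∧ t₂.isGround
  | not φ => φ.isGround
  | and φ ψ => φ.isGround ∧ ψ.isGround
  | ex _ _ => False
  | box φ => φ.isGround

def isAtomic : Formula S → Prop
  | atom _ _ => True
  | eq _ _ => True
  | not _ => False
  | and _ _ => False
  | ex _ _ => False
  | box _ => False

/-- The modal operator 𝖫 occurs only applied to (objective) atomic formulas. -/
def boxAtomic : Formula S → Prop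
  | atom _ _ => True
  | eq _ _ => True
  | not φ => φ.boxAtomic
  | and φ ψ => φ.boxAtomic ∧ ψ.boxAtomic
  | ex _ φ => φ.boxAtomic
  | box φ => φ.isAtomic

/-- Propositional formulas: built from 0-ary predicates only. -/
def isPropositional : Formula S → Prop
  | atom p _ => S.arP p = 0
  | eq _ _ => False
  | not φ => φ.isPropositional
  | and φ ψ => φ.isPropositional ∧ ψ.isPropositional
  | ex _ _ => False
  | box _ => False

def freeIn (x : ℕ) : Formula S → Prop
  | atom _ ts => ∃ i, (ts i).hasVar x
  | eq t₁ t₂ => t₁.hasVar x ∨ t₂.hasVar x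
  | not φ => φ.freeIn x
  | and φ ψ => φ.freeIn x ∨ ψ.freeIn x
  | ex y φ => x ≠ y ∧ φ.freeIn x
  | box φ => φ.freeIn x

/-- A formula is closed (a sentence) if it has no free variables. -/
def closed (φ : Formula S) : Prop := ∀ x, ¬ φ.freeIn x

/-- Capture-avoiding application of a partial name substitution (values are ground). -/
def subst (β : ℕ → Option (Term S)) : Formula S → Formula S
  | atom p ts => atom p (fun i => (ts i).subst β)
  | eq t₁ t₂ => eq (t₁.subst β) (t₂.subst β)
  | not φ => not (φ.subst β)
  | and φ ψ => and (φ.subst β) (ψ.subst β)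
  | ex y φ => ex y (φ.subst (fun z => if z = y then none else β z))
  | box φ => box (φ.subst β)

def funcs : Formula S → Set S.Func
  | atom _ ts => ⋃ i, (ts i).funcs
  | eq t₁ t₂ => t₁.funcs ∪ t₂.funcs
  | not φ => φ.funcs
  | and φ ψ => φ.funcs ∪ ψ.funcs
  | ex _ φ => φ.funcs
  | box φ => φ.funcs

def preds : Formula S → Set S.Pred
  | atom p _ => {p}
  | eq _ _ => ∅
  | not φ => φ.preds
  | and φ ψ => φ.preds ∪ ψ.preds
  | ex _ φ => φ.preds
  | box φ => φ.preds

/-- `φ ∨ ψ` as an abbreviation: `¬(¬φ ∧ ¬ψ)`. -/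
def or (φ ψ : Formula S) : Formula S := not (and (not φ) (not ψ))

/-- `φ ⊃ ψ` as an abbreviation: `¬(φ ∧ ¬ψ)`. -/
def imp (φ ψ : Formula S) : Formula S := not (and φ (not ψ))

/-- `∀x.φ` as an abbreviation: `¬∃x.¬φ`. -/
def all (x : ℕ) (φ : Formula S) : Formula S := not (ex x (not φ))

end Formula

/-! ## Semantics -/

structure Interp (S : Sig) where
  U : Type
  nonempty : Nonempty U
  interpF : (f : S.Func) → (Fin (S.arF f) → U) → U
  interpP : (p : S.Pred) → (Fin (S.arP p) → U) → Prop

noncomputable def Interp.dflt {S : Sig} (w : Interp S) : w.U := Classical.choice w.nonempty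

def Term.eval {S : Sig} (w : Interp S) (B : ℕ → w.U) : Term S → w.U
  | Term.var x => B x
  | Term.func f ts => w.interpF f (fun i => (ts i).eval w B)

/-- Evaluation of a ground term (the assignment is irrelevant). -/
noncomputable def Term.evalG {S : Sig} (w : Interp S) (t : Term S) : w.U :=
  t.eval w (fun _ => w.dflt)

/-- An individual is named if some name (ground term) denotes it. -/
def IsNamed {S : Sig} (w : Interp S) (k : w.U) : Prop :=
  ∃ t : Term S, t.isGround ∧ Term.evalG w t = k

/-- A name substitution `β` is associated with the variable assignment `B`:
its domain is exactly the set of variables whose `B`-value is named, and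
it assigns to each such variable a name denoting its `B`-value. -/
def Assoc {S : Sig} (w : Interp S) (B : ℕ → w.U) (β : ℕ → Option (Term S)) : Prop :=
  ∀ x : ℕ,
    (IsNamed w (B x) → (β x).isSome) ∧
    (∀ t : Term S, β x = some t → t.isGround ∧ Term.evalG w t = B x)

/-- The two semantics: any-name (E) and all-name (A). -/
inductive Sem : Type
  | any
  | all

/-- Satisfaction of a formula in an autoepistemic interpretation `⟨w,Γ⟩`
under a variable assignment, for the any-name (E) resp. all-name (A) semantics. -/
def Sat {S : Sig} (X : Sem) (w : Interp S) (Γ : Set (Formula S)) :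
    Formula S → (ℕ → w.U) → Prop
  | Formula.atom p ts, B => w.interpP p (fun i => (ts i).eval w B)
  | Formula.eq t₁ t₂, B => t₁.eval w B = t₂.eval w B
  | Formula.not φ, B => ¬ Sat X w Γ φ B
  | Formula.and φ ψ, B => Sat X w Γ φ B ∧ Sat X w Γ ψ B
  | Formula.ex x φ, B => ∃ u : w.U, Sat X w Γ φ (Function.update B x u)
  | Formula.box φ, B =>
      match X with
      | Sem.any => ∃ β, Assoc w B β ∧ (φ.subst β).closed ∧ φ.subst β ∈ Γ
      | Sem.all => ∀ β, Assoc w B β → (φ.subst β).closed ∧ φ.subst β ∈ Γ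

def ModelsF {S : Sig} (X : Sem) (w : Interp S) (Γ : Set (Formula S)) (φ : Formula S) : Prop :=
  ∀ B : ℕ → w.U, Sat X w Γ φ B

def ModelsT {S : Sig} (X : Sem) (w : Interp S) (Γ Φ : Set (Formula S)) : Prop :=
  ∀ φ ∈ Φ, ModelsF X w Γ φ

/-- `Φ ⊨ˣ_Γ φ`. -/
def Entails {S : Sig} (X : Sem) (Φ Γ : Set (Formula S)) (φ : Formula S) : Prop :=
  ∀ w : Interp S, ModelsT X w Γ Φ → ModelsF X w Γ φ

/-- The standard names assumption: all names are interpreted distinctly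
and every individual is named. -/
def SNA {S : Sig} (w : Interp S) : Prop :=
  (∀ t₁ t₂ : Term S, t₁.isGround → t₂.isGround → Term.evalG w t₁ = Term.evalG w t₂ → t₁ = t₂) ∧
  (∀ k : w.U, IsNamed w k)

/-- Entailment restricted to interpretations satisfying the standard names assumption. -/
def EntailsSN {S : Sig} (X : Sem) (Φ Γ : Set (Formula S)) (φ : Formula S) : Prop :=
  ∀ w : Interp S, SNA w → ModelsT X w Γ Φ → ModelsF X w Γ φ

/-- `T` is a stableˣ expansion of `Φ`. -/
def StableExp {S : Sig} (X : Sem) (Φ T : Set (Formula S)) : Prop :=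
  T = {φ | Entails X Φ T φ}

def objOf {S : Sig} (T : Set (Formula S)) : Set (Formula S) :=
  {φ ∈ T | φ.isObjective}

def ogOf {S : Sig} (T : Set (Formula S)) : Set (Formula S) :=
  {φ ∈ T | φ.isObjective ∧ φ.isGround}

def ogaOf {S : Sig} (T : Set (Formula S)) : Set (Formula S) :=
  {φ ∈ T | φ.isObjective ∧ φ.isGround ∧ φ.isAtomic}

def Consistent {S : Sig} (T : Set (Formula S)) : Prop := T ≠ Set.univ

/-- `Φ₁ ≡ˣ Φ₂`: same stableˣ expansions. -/
def ExpEquiv {S : Sig} (X : Sem) (Φ₁ Φ₂ : Set (Formula S)) : Prop :=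
  ∀ T, StableExp X Φ₁ T ↔ StableExp X Φ₂ T

/-- `Φ₁ ≡ˣ_γ Φ₂` for a selector `sel` (e.g. `ogaOf`): the stableˣ expansions
correspond with respect to `sel`. -/
def ExpEquivSel {S : Sig} (X : Sem) (sel : Set (Formula S) → Set (Formula S))
    (Φ₁ Φ₂ : Set (Formula S)) : Prop :=
  (∀ T, StableExp X Φ₁ T → ∃ T', StableExp X Φ₂ T' ∧ sel T = sel T') ∧
  (∀ T', StableExp X Φ₂ T' → ∃ T, StableExp X Φ₁ T ∧ sel T = sel T')

/-- Autoepistemicˣ consequences of `Φ`. -/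
def Cn {S : Sig} (X : Sem) (Φ : Set (Formula S)) : Set (Formula S) :=
  {φ | ∀ T, StableExp X Φ T → φ ∈ T}

def CnO {S : Sig} (X : Sem) (Φ : Set (Formula S)) : Set (Formula S) :=
  {φ ∈ Cn X Φ | φ.isObjective}

def CnOg {S : Sig} (X : Sem) (Φ : Set (Formula S)) : Set (Formula S) :=
  {φ ∈ Cn X Φ | φ.isObjective ∧ φ.isGround}

/-! ## Logic programs -/

structure PAtom (S : Sig) where
  p : S.Pred
  args : Fin (S.arP p) → Term S

namespace PAtom

variable {S : Sig}

def toFormula (a : PAtom S) : Formula S := Formula.atom a.p a.args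

def isGround (a : PAtom S) : Prop := ∀ i, (a.args i).isGround

def hasVar (x : ℕ) (a : PAtom S) : Prop := ∃ i, (a.args i).hasVar x

def substA (σ : ℕ → Term S) (a : PAtom S) : PAtom S :=
  ⟨a.p, fun i => (a.args i).subst (fun x => some (σ x))⟩

def funcs (a : PAtom S) : Set S.Func := ⋃ i, (a.args i).funcs

end PAtom

/-- A (disjunctive) rule `h₁ | … | h_l ← b₁,…,b_m, not c₁,…,not c_n`,
together with a list of the variables occurring in it. -/
structure Rule (S : Sig) where
  head : List (PAtom S)
  pos : List (PAtom S)
  neg : List (PAtom S)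
  vars : List ℕ

namespace Rule

variable {S : Sig}

def atoms (r : Rule S) : List (PAtom S) := r.head ++ r.pos ++ r.neg

def hasVar (x : ℕ) (r : Rule S) : Prop := ∃ a ∈ r.atoms, PAtom.hasVar x a

/-- Well-formedness: at least one head atom, and `vars` lists all variables of the rule. -/
def wf (r : Rule S) : Prop := r.head ≠ [] ∧ ∀ x, r.hasVar x → x ∈ r.vars

def isNormal (r : Rule S) : Prop := r.head.length = 1

def isGround (r : Rule S) : Prop := (∀ a ∈ r.atoms, a.isGround) ∧ r.vars = []

def isSafe (r : Rule S) : Prop := ∀ x, r.hasVar x → ∃ a ∈ r.pos, PAtom.hasVar x a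

def isPositive (r : Rule S) : Prop := r.neg = []

def applySubst (σ : ℕ → Term S) (r : Rule S) : Rule S :=
  ⟨r.head.map (PAtom.substA σ), r.pos.map (PAtom.substA σ), r.neg.map (PAtom.substA σ), []⟩

end Rule

abbrev Program (S : Sig) := Set (Rule S)

def progWf {S : Sig} (P : Program S) : Prop := ∀ r ∈ P, r.wf
def progNormal {S : Sig} (P : Program S) : Prop := ∀ r ∈ P, r.isNormal
def progGround {S : Sig} (P : Program S) : Prop := ∀ r ∈ P, r.isGround
def progSafe {S : Sig} (P : Program S) : Prop := ∀ r ∈ P, r.isSafe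
def progPositive {S : Sig} (P : Program S) : Prop := ∀ r ∈ P, r.isPositive

/-- The function symbols occurring in `P` (part of the signature `Σ_P`). -/
def progFuncs {S : Sig} (P : Program S) : Set S.Func :=
  {f | ∃ r ∈ P, ∃ a ∈ r.atoms, f ∈ a.funcs}

/-- The predicate symbols occurring in `P` (part of the signature `Σ_P`). -/
def progPreds {S : Sig} (P : Program S) : Set S.Pred :=
  {q | ∃ r ∈ P, ∃ a ∈ r.atoms, a.p = q}

/-- The ambient signature is exactly the signature `Σ_P` of `P`. -/
def fullSig {S : Sig} (P : Program S) : Prop :=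
  (∀ f : S.Func, f ∈ progFuncs P) ∧ (∀ q : S.Pred, q ∈ progPreds P)

/-- Standing assumption: `Σ_P` contains a 0-ary function symbol whenever it
has a predicate symbol of arity greater than 0. -/
def goodSig {S : Sig} (P : Program S) : Prop :=
  (∃ q ∈ progPreds P, 0 < S.arP q) → ∃ f ∈ progFuncs P, S.arF f = 0

/-! ## Embeddings of logic programs into FO-AEL -/

def andAll {S : Sig} : Formula S → List (Formula S) → Formula S
  | φ, [] => φ
  | φ, ψ :: rest => andAll (Formula.and φ ψ) rest

def orAll {S : Sig} : Formula S → List (Formula S) → Formula S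
  | φ, [] => φ
  | φ, ψ :: rest => orAll (Formula.or φ ψ) rest

/-- `impOf ants c` is `⋀ ants ⊃ c` (just `c` if there are no antecedents). -/
def impOf {S : Sig} : List (Formula S) → Formula S → Formula S
  | [], c => c
  | a :: rest, c => Formula.imp (andAll a rest) c

/-- Disjunction of a nonempty list (junk value on the empty list,
which is excluded by rule well-formedness). -/
def disjOf {S : Sig} : List (Formula S) → Formula S
  | [] => Formula.eq (Term.var 0) (Term.var 0)
  | h :: rest => orAll h rest

/-- Universal uclosure over the listed variables. -/
def uclosure {S : Sig} (vs : List ℕ) (φ : Formula S) : Formula S :=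
  vs.foldr Formula.all φ

def bodyHP {S : Sig} (r : Rule S) : List (Formula S) :=
  r.pos.map PAtom.toFormula ++ r.neg.map (fun c => Formula.not (Formula.box c.toFormula))

def bodyE {S : Sig} (r : Rule S) : List (Formula S) :=
  r.pos.map (fun b => Formula.and b.toFormula (Formula.box b.toFormula)) ++
    r.neg.map (fun c => Formula.not (Formula.box c.toFormula))

/-- `τ_HP(r)` resp. `τ^∨_HP(r)`. -/
def embHP {S : Sig} (r : Rule S) : Formula S :=
  uclosure r.vars (impOf (bodyHP r) (disjOf (r.head.map PAtom.toFormula)))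

/-- `τ_EB(r)` resp. `τ^∨_EB(r)`. -/
def embEB {S : Sig} (r : Rule S) : Formula S :=
  uclosure r.vars (impOf (bodyE r) (disjOf (r.head.map PAtom.toFormula)))

/-- `τ_EH(r)` resp. `τ^∨_EH(r)`. -/
def embEH {S : Sig} (r : Rule S) : Formula S :=
  uclosure r.vars (impOf (bodyE r)
    (disjOf (r.head.map (fun h => Formula.and h.toFormula (Formula.box h.toFormula)))))

/-- The unique-names axioms `¬𝖫(t₁=t₂) ⊃ t₁≠t₂` for distinct names of `Σ_P`. -/
def UNAax {S : Sig} (P : Program S) : Set (Formula S) :=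
  {φ | ∃ t₁ t₂ : Term S, t₁.isNameOf (progFuncs P) ∧ t₂.isNameOf (progFuncs P) ∧ t₁ ≠ t₂ ∧
        φ = Formula.imp (Formula.not (Formula.box (Formula.eq t₁ t₂)))
              (Formula.not (Formula.eq t₁ t₂))}

/-- The positive introspection axioms `α ⊃ 𝖫α` for objective ground atoms of `Σ_P`. -/
def PIAax {S : Sig} (P : Program S) : Set (Formula S) :=
  {φ | ∃ a : PAtom S, a.p ∈ progPreds P ∧ (∀ i, (a.args i).isNameOf (progFuncs P)) ∧
        φ = Formula.imp a.toFormula (Formula.box a.toFormula)}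

def ruleEmb {S : Sig} (emb : Rule S → Formula S) (P : Program S) : Set (Formula S) :=
  {φ | ∃ r ∈ P, φ = emb r}

def tauHP {S : Sig} (P : Program S) : Set (Formula S) := ruleEmb embHP P ∪ UNAax P
def tauEB {S : Sig} (P : Program S) : Set (Formula S) := ruleEmb embEB P ∪ UNAax P
def tauEH {S : Sig} (P : Program S) : Set (Formula S) := ruleEmb embEH P ∪ UNAax P
def tauHPv {S : Sig} (P : Program S) : Set (Formula S) := ruleEmb embHP P ∪ PIAax P ∪ UNAax P
def tauEBv {S : Sig} (P : Program S) : Set (Formula S) := ruleEmb embEB P ∪ PIAax P ∪ UNAax P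
def tauEHv {S : Sig} (P : Program S) : Set (Formula S) := ruleEmb embEH P ∪ UNAax P
def tauHPminus {S : Sig} (P : Program S) : Set (Formula S) := ruleEmb embHP P
def tauEHvminus {S : Sig} (P : Program S) : Set (Formula S) := ruleEmb embEH P

/-! ## Grounding and stable models -/

/-- The grounding of `P`: all ground instantiations of rules of `P`
obtained by replacing variables with names of `Σ_P`. -/
def grP {S : Sig} (P : Program S) : Program S :=
  {r' | ∃ r ∈ P, ∃ σ : ℕ → Term S,
        (∀ x, r.hasVar x → (σ x).isNameOf (progFuncs P)) ∧ r' = Rule.applySubst σ r}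

/-- A Herbrand interpretation: a set of ground atomic formulas. -/
def HerbrandI {S : Sig} (M : Set (Formula S)) : Prop :=
  ∀ φ ∈ M, φ.isAtomic ∧ φ.isGround

/-- `M` is a Herbrand model of the positive ground program `Q` (relative to the
names of `Σ_P`): rules are satisfied and `t = t ∈ M` for every name `t`. -/
def HerbrandModelOf {S : Sig} (P Q : Program S) (M : Set (Formula S)) : Prop :=
  HerbrandI M ∧
  (∀ r ∈ Q, (∀ b ∈ r.pos, PAtom.toFormula b ∈ M) → ∃ h ∈ r.head, PAtom.toFormula h ∈ M) ∧
  (∀ t : Term S, t.isNameOf (progFuncs P) → Formula.eq t t ∈ M)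

/-- The Gelfond–Lifschitz reduct of `gr(P)` with respect to `M`. -/
def reduct {S : Sig} (P : Program S) (M : Set (Formula S)) : Program S :=
  {r' | ∃ r ∈ grP P, (∀ c ∈ r.neg, PAtom.toFormula c ∉ M) ∧
        r' = ⟨r.head, r.pos, [], r.vars⟩}

/-- `M` is a stable model of `P`: a minimal Herbrand model of the reduct of `gr(P)` w.r.t. `M`. -/
def isStableModel {S : Sig} (P : Program S) (M : Set (Formula S)) : Prop :=
  HerbrandModelOf P (reduct P M) M ∧
  ∀ M', M' ⊆ M → HerbrandModelOf P (reduct P M) M' → M' = M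

/-! ## First-order theories and classes thereof -/

/-- An FO theory: a set of objective sentences. -/
def FOTheory {S : Sig} (Φ : Set (Formula S)) : Prop :=
  ∀ φ ∈ Φ, φ.isObjective ∧ φ.closed

def theoryFuncs {S : Sig} (Φ : Set (Formula S)) : Set S.Func := {f | ∃ φ ∈ Φ, f ∈ φ.funcs}
def theoryPreds {S : Sig} (Φ : Set (Formula S)) : Set S.Pred := {q | ∃ φ ∈ Φ, q ∈ φ.preds}

/-- The ambient signature is exactly the union of the signatures of `Φ` and `P`. -/
def CoverSig {S : Sig} (Φ : Set (Formula S)) (P : Program S) : Prop :=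
  (∀ f : S.Func, f ∈ theoryFuncs Φ ∪ progFuncs P) ∧
  (∀ q : S.Pred, q ∈ theoryPreds Φ ∪ progPreds P)

def exClosure {S : Sig} (ys : List ℕ) (φ : Formula S) : Formula S := ys.foldr Formula.ex φ

/-- A Horn sentence `(∀)(b₁ ∧ … ∧ b_n ⊃ h)` with atomic `b_i`, `h`
(the consequent `h` may be absent). -/
def isHornSentence {S : Sig} (φ : Formula S) : Prop :=
  ∃ (vs : List ℕ) (bs : List (Formula S)),
    (∀ b ∈ bs, b.isAtomic) ∧
    ((∃ h : Formula S, h.isAtomic ∧ φ = uclosure vs (impOf bs h)) ∨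
     (∃ b rest, bs = b :: rest ∧ φ = uclosure vs (Formula.not (andAll b rest))))

def HornTheory {S : Sig} (Φ : Set (Formula S)) : Prop :=
  FOTheory Φ ∧ ∀ φ ∈ Φ, isHornSentence φ

/-- A generalized Horn sentence `(∀)(b₁ ∧ … ∧ b_n ⊃ ∃ȳ.h)` with atomic `b_i`, `h`,
the variables `ȳ` occurring only in `h` (the consequent may be absent). -/
def isGHornSentence {S : Sig} (φ : Formula S) : Prop :=
  ∃ (vs : List ℕ) (bs : List (Formula S)),
    (∀ b ∈ bs, b.isAtomic) ∧
    ((∃ (ys : List ℕ) (h : Formula S), h.isAtomic ∧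
        (∀ y ∈ ys, ∀ b ∈ bs, ¬ b.freeIn y) ∧
        φ = uclosure vs (impOf bs (exClosure ys h))) ∨
     (∃ b rest, bs = b :: rest ∧ φ = uclosure vs (Formula.not (andAll b rest))))

def GHornTheory {S : Sig} (Φ : Set (Formula S)) : Prop :=
  FOTheory Φ ∧ ∀ φ ∈ Φ, isGHornSentence φ

def PropTheory {S : Sig} (Φ : Set (Formula S)) : Prop :=
  FOTheory Φ ∧ ∀ φ ∈ Φ, φ.isPropositional

/-!
A stable expansion is determined by its models, and a formula in which `𝖫` is applied only to
atoms sees a belief set only through its objective ground atoms. Hence, if two such theories entail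
the same ground atoms relative to a stable expansion `T` of the first, then the set of beliefs
generated by the models of the second relative to `T` is a stable expansion of the second with the
same objective ground atoms as `T`.

It remains to compare the ground atoms entailed by the embeddings of `P` and of `gr(P)`. A model of
the former is a model of the latter: instantiating a rule by names amounts to evaluating it at the
individuals they denote, and whether `𝖫α` holds does not depend on the names chosen, because by the
unique-names axioms coreferring names are believed to be equal. (In `τ_HP` all occurrences of `𝖫`
are positive, being negated in rule bodies, and under the all-name semantics `𝖫α` implies belief in
every instance of `α` by names; so there the unique-names axioms can be dispensed with.) Conversely,
a model of the embedding of `gr(P)` is replaced by the Herbrand structure satisfying the same ground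
atoms: all its individuals are named, each by one name, so it satisfies every rule of `P` because it
satisfies the ground instances. Equations between distinct names fail there, and thus are not
entailed.
-/

/-! ### Ground terms, substitutions and evaluation -/

namespace Term

variable {S : Sig}

theorem isNameOf.isGround {F : Set S.Func} {t : Term S} (ht : t.isNameOf F) : t.isGround := by
  induction t with
  | var _ => exact ht
  | func f ts ih => exact fun i => ih i (ht.2 i)

theorem isGround.isNameOf {F : Set S.Func} (hF : ∀ f, f ∈ F) {t : Term S} (ht : t.isGround) :
    t.isNameOf F := by
  induction t with
  | var _ => exact ht
  | func f ts ih => exact ⟨hF f, fun i => ih i (ht i)⟩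

theorem isGround.not_hasVar {t : Term S} (ht : t.isGround) (x : ℕ) : ¬ t.hasVar x := by
  induction t with
  | var _ => exact ht.elim
  | func f ts ih => exact fun ⟨i, hi⟩ => ih i (ht i) hi

theorem isGround_of_forall_not_hasVar {t : Term S} (ht : ∀ x, ¬ t.hasVar x) : t.isGround := by
  induction t with
  | var y => exact ht y rfl
  | func f ts ih => exact fun i => ih i fun x hx => ht x ⟨i, hx⟩

theorem isGround.subst_eq {t : Term S} (ht : t.isGround) (β : ℕ → Option (Term S)) :
    t.subst β = t := by
  induction t with
  | var _ => exact ht.elim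
  | func f ts ih => exact congrArg (func f) (funext fun i => ih i (ht i))

theorem subst_congr {t : Term S} {β β' : ℕ → Option (Term S)}
    (h : ∀ x, t.hasVar x → β x = β' x) : t.subst β = t.subst β' := by
  induction t with
  | var y => simp only [subst, h y rfl]
  | func f ts ih => exact congrArg (func f) (funext fun i => ih i fun x hx => h x ⟨i, hx⟩)

theorem isGround_subst_iff (β : ℕ → Option (Term S)) (t : Term S) :
    (t.subst β).isGround ↔ ∀ x, t.hasVar x → ((β x).getD (var x)).isGround := by
  induction t with
  | var y => exact ⟨fun h _ hx => hx ▸ h, fun h => h y rfl⟩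
  | func f ts ih =>
    simp only [subst, isGround, hasVar, ih]
    exact ⟨fun h x ⟨i, hi⟩ => h i x hi, fun h i x hi => h x ⟨i, hi⟩⟩

theorem isGround.eval_eq {t : Term S} (ht : t.isGround) (w : Interp S) (B : ℕ → w.U) :
    t.eval w B = t.evalG w := by
  induction t with
  | var _ => exact ht.elim
  | func f ts ih => exact congrArg (w.interpF f) (funext fun i => ih i (ht i))

theorem eval_subst (w : Interp S) (B : ℕ → w.U) (β : ℕ → Option (Term S)) (t : Term S) :
    (t.subst β).eval w B = t.eval w (fun x => ((β x).getD (var x)).eval w B) := by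
  induction t with
  | var _ => rfl
  | func f ts ih => exact congrArg (w.interpF f) (funext ih)

end Term

/-! ### Dependence of satisfaction on the belief set -/

namespace Formula

variable {S : Sig}

theorem isAtomic.isObjective {φ : Formula S} (hφ : φ.isAtomic) : φ.isObjective := by
  cases φ <;> first | exact trivial | exact hφ.elim

theorem isAtomic.subst {φ : Formula S} (hφ : φ.isAtomic) (β : ℕ → Option (Term S)) :
    (φ.subst β).isAtomic := by
  cases φ <;> first | exact trivial | exact hφ.elim

theorem isGround.subst_eq {φ : Formula S} (hφ : φ.isGround) (β : ℕ → Option (Term S)) :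
    φ.subst β = φ := by
  induction φ with
  | atom p ts => exact congrArg (atom p) (funext fun i => (hφ i).subst_eq β)
  | eq t₁ t₂ => exact congrArg₂ eq (hφ.1.subst_eq β) (hφ.2.subst_eq β)
  | not φ ih => exact congrArg not (ih hφ)
  | and φ ψ ihφ ihψ => exact congrArg₂ and (ihφ hφ.1) (ihψ hφ.2)
  | ex y φ _ => exact hφ.elim
  | box φ ih => exact congrArg box (ih hφ)

theorem isGround.closed {φ : Formula S} (hφ : φ.isGround) : φ.closed := by
  intro x
  induction φ with
  | atom p ts => exact fun ⟨i, hi⟩ => (hφ i).not_hasVar x hi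
  | eq t₁ t₂ => exact not_or.2 ⟨hφ.1.not_hasVar x, hφ.2.not_hasVar x⟩
  | not φ ih => exact ih hφ
  | and φ ψ ihφ ihψ => exact not_or.2 ⟨ihφ hφ.1, ihψ hφ.2⟩
  | ex y φ _ => exact hφ.elim
  | box φ ih => exact ih hφ

theorem isAtomic.isGround_of_closed {φ : Formula S} (hφ : φ.isAtomic) (hc : φ.closed) :
    φ.isGround := by
  cases φ with
  | atom p ts => exact fun i => Term.isGround_of_forall_not_hasVar fun x hx => hc x ⟨i, hx⟩
  | eq t₁ t₂ =>
    exact ⟨Term.isGround_of_forall_not_hasVar fun x hx => hc x (.inl hx),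
      Term.isGround_of_forall_not_hasVar fun x hx => hc x (.inr hx)⟩
  | _ => exact hφ.elim

/-- The arguments of the modal operators of a formula, not counting those nested inside another
modal operator. -/
def boxed : Formula S → Set (Formula S)
  | atom _ _ => ∅
  | eq _ _ => ∅
  | not φ => φ.boxed
  | and φ ψ => φ.boxed ∪ ψ.boxed
  | ex _ φ => φ.boxed
  | box φ => {φ}

/-- The nesting depth of the modal operator. -/
def modalDepth : Formula S → ℕ
  | atom _ _ => 0
  | eq _ _ => 0
  | not φ => φ.modalDepth
  | and φ ψ => max φ.modalDepth ψ.modalDepth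
  | ex _ φ => φ.modalDepth
  | box φ => φ.modalDepth + 1

theorem modalDepth_subst (β : ℕ → Option (Term S)) (φ : Formula S) :
    (φ.subst β).modalDepth = φ.modalDepth := by
  induction φ generalizing β <;> simp_all only [subst, modalDepth]

theorem modalDepth_lt_of_mem_boxed {φ ψ : Formula S} (hψ : ψ ∈ φ.boxed) :
    ψ.modalDepth < φ.modalDepth := by
  induction φ with
  | atom | eq => exact hψ.elim
  | not φ ih => exact ih hψ
  | and φ χ ihφ ihχ => exact lt_max_iff.2 (hψ.imp ihφ ihχ)
  | ex y φ ih => exact ih hψ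
  | box φ _ => exact hψ ▸ Nat.lt_succ_self _

theorem boxAtomic.isAtomic_of_mem_boxed {φ ψ : Formula S} (hφ : φ.boxAtomic)
    (hψ : ψ ∈ φ.boxed) : ψ.isAtomic := by
  induction φ with
  | atom | eq => exact hψ.elim
  | not φ ih => exact ih hφ hψ
  | and φ χ ihφ ihχ => exact hψ.elim (ihφ hφ.1) (ihχ hφ.2)
  | ex y φ ih => exact ih hφ hψ
  | box φ _ => exact hψ ▸ hφ

end Formula

section Beliefs

variable {S : Sig}

theorem sat_congr (X : Sem) (w : Interp S) {Γ Γ' : Set (Formula S)} {φ : Formula S}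
    (h : ∀ ψ ∈ φ.boxed, ∀ β, (ψ.subst β).closed → (ψ.subst β ∈ Γ ↔ ψ.subst β ∈ Γ'))
    (B : ℕ → w.U) : Sat X w Γ φ B ↔ Sat X w Γ' φ B := by
  induction φ generalizing B with
  | atom | eq => exact Iff.rfl
  | not φ ih => exact not_congr (ih h B)
  | and φ χ ihφ ihχ =>
    exact and_congr (ihφ (fun ψ hψ => h ψ (.inl hψ)) B) (ihχ (fun ψ hψ => h ψ (.inr hψ)) B)
  | ex y φ ih => exact exists_congr fun u => ih h _
  | box φ _ =>
    have hmem (β) : ((φ.subst β).closed ∧ φ.subst β ∈ Γ) ↔ (φ.subst β).closed ∧ φ.subst β ∈ Γ' :=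
      and_congr_right (h φ rfl β)
    cases X <;> simp only [Sat, hmem]

theorem Formula.isAtomic.sat_congr {φ : Formula S} (hφ : φ.isAtomic) (X : Sem) (w : Interp S)
    (Γ Γ' : Set (Formula S)) (B : ℕ → w.U) : Sat X w Γ φ B ↔ Sat X w Γ' φ B := by
  cases φ <;> first | exact Iff.rfl | exact hφ.elim

theorem Formula.boxAtomic.sat_congr {φ : Formula S} (hφ : φ.boxAtomic) (X : Sem) (w : Interp S)
    {Γ Γ' : Set (Formula S)} (hΓ : ogaOf Γ = ogaOf Γ') (B : ℕ → w.U) :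
    Sat X w Γ φ B ↔ Sat X w Γ' φ B := by
  refine _root_.sat_congr X w (fun ψ hψ β hc => ?_) B
  have ha : (ψ.subst β).isAtomic := (hφ.isAtomic_of_mem_boxed hψ).subst β
  have hog : (ψ.subst β).isObjective ∧ (ψ.subst β).isGround ∧ (ψ.subst β).isAtomic :=
    ⟨ha.isObjective, ha.isGround_of_closed hc, ha⟩
  calc ψ.subst β ∈ Γ ↔ ψ.subst β ∈ ogaOf Γ := (and_iff_left hog).symm
    _ ↔ ψ.subst β ∈ ogaOf Γ' := by rw [hΓ]
    _ ↔ ψ.subst β ∈ Γ' := and_iff_left hog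

theorem modelsT_congr (X : Sem) (w : Interp S) {Γ Γ' Φ : Set (Formula S)}
    (hΦ : ∀ φ ∈ Φ, φ.boxAtomic) (hΓ : ogaOf Γ = ogaOf Γ') :
    ModelsT X w Γ Φ ↔ ModelsT X w Γ' Φ :=
  forall₂_congr fun φ hφ => forall_congr' fun B => (hΦ φ hφ).sat_congr X w hΓ B

theorem StableExp.mem_iff {X : Sem} {Φ T : Set (Formula S)} (hT : StableExp X Φ T)
    (φ : Formula S) : φ ∈ T ↔ Entails X Φ T φ :=
  Set.ext_iff.1 hT φ

/-- Membership in the belief set generated by a class `W` of structures, i.e. the set of formulas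
valid in `W` relative to that very set; it is well defined since the truth value of a formula
depends only on the beliefs of smaller modal depth. -/
def GeneratedBelief (X : Sem) (W : Set (Interp S)) (φ : Formula S) : Prop :=
  ∀ w ∈ W, ModelsF X w {ψ | ∃ _ : ψ.modalDepth < φ.modalDepth, GeneratedBelief X W ψ} φ
termination_by φ.modalDepth

theorem exists_forall_mem_iff_modelsF (X : Sem) (W : Set (Interp S)) :
    ∃ T : Set (Formula S), ∀ φ, φ ∈ T ↔ ∀ w ∈ W, ModelsF X w T φ := by
  refine ⟨{φ | GeneratedBelief X W φ}, fun φ => ?_⟩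
  change GeneratedBelief X W φ ↔ _
  rw [GeneratedBelief]
  refine forall₂_congr fun w _ => forall_congr' fun B => sat_congr X w (fun ψ hψ β _ => ?_) B
  exact exists_prop_of_true <|
    (ψ.modalDepth_subst β).trans_lt (Formula.modalDepth_lt_of_mem_boxed hψ)

theorem StableExp.exists_ogaOf_eq {X : Sem} {Φ₁ Φ₂ T : Set (Formula S)} (hT : StableExp X Φ₁ T)
    (hΦ₂ : ∀ φ ∈ Φ₂, φ.boxAtomic)
    (hE : ∀ φ : Formula S, φ.isGround → φ.isAtomic → (Entails X Φ₁ T φ ↔ Entails X Φ₂ T φ)) :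
    ∃ T', StableExp X Φ₂ T' ∧ ogaOf T = ogaOf T' := by
  obtain ⟨T', hT'⟩ := exists_forall_mem_iff_modelsF X {w : Interp S | ModelsT X w T Φ₂}
  have hoga : ogaOf T = ogaOf T' := by
    ext φ
    refine and_congr_left fun ⟨_, hg, ha⟩ => ?_
    rw [hT.mem_iff, hE φ hg ha, hT']
    exact forall₂_congr fun w _ => forall_congr' fun B => ha.sat_congr X w T T' B
  refine ⟨T', Set.ext fun φ => (hT' φ).trans ?_, hoga⟩
  exact forall_congr' fun w => imp_congr_left (modelsT_congr X w hΦ₂ hoga)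

end Beliefs

/-! ### Associated name substitutions -/

section Assoc

variable {S : Sig} {w : Interp S} {B : ℕ → w.U} {β β' : ℕ → Option (Term S)}

theorem exists_assoc (w : Interp S) (B : ℕ → w.U) : ∃ β, Assoc w B β := by
  have (x : ℕ) : ∃ o : Option (Term S), (IsNamed w (B x) → o.isSome) ∧
      ∀ t, o = some t → t.isGround ∧ t.evalG w = B x := by
    by_cases hx : IsNamed w (B x)
    · obtain ⟨t, ht⟩ := hx
      exact ⟨some t, fun _ => rfl, fun s hs => Option.some.inj hs ▸ ht⟩
    · exact ⟨none, fun h => absurd h hx, fun _ h => nomatch h⟩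
  exact Classical.axiom_of_choice this

open Classical in
theorem exists_assoc_evalG (w : Interp S) (σ : ℕ → Term S) :
    ∃ β, Assoc w (fun x => (σ x).evalG w) β ∧ ∀ x, (σ x).isGround → β x = some (σ x) := by
  obtain ⟨β, hβ⟩ := exists_assoc w (fun x => (σ x).evalG w)
  refine ⟨fun x => if (σ x).isGround then some (σ x) else β x, fun x => ?_, fun x hx => if_pos hx⟩
  by_cases hx : (σ x).isGround
  · simp [hx]
  · simpa [hx] using hβ x

namespace Assoc

theorem isGround_of_eq_some (hβ : Assoc w B β) (x : ℕ) (s : Term S) (hs : β x = some s) :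
    s.isGround :=
  ((hβ x).2 s hs).1

theorem isSome_iff (hβ : Assoc w B β) (x : ℕ) : (β x).isSome ↔ IsNamed w (B x) :=
  ⟨fun h => ⟨(β x).get h, (hβ x).2 _ (Option.some_get h).symm⟩, (hβ x).1⟩

theorem isGround_getD_iff (hβ : Assoc w B β) (x : ℕ) :
    ((β x).getD (.var x)).isGround ↔ IsNamed w (B x) := by
  rw [← hβ.isSome_iff]
  cases hx : β x with
  | none => exact iff_of_false id Bool.false_ne_true
  | some s => exact iff_of_true (hβ.isGround_of_eq_some x s hx) rfl

theorem isGround_subst_iff (hβ : Assoc w B β) (t : Term S) :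
    (t.subst β).isGround ↔ ∀ x, t.hasVar x → IsNamed w (B x) := by
  simp only [Term.isGround_subst_iff, hβ.isGround_getD_iff]

theorem eval_subst (hβ : Assoc w B β) (t : Term S) : (t.subst β).eval w B = t.eval w B := by
  rw [Term.eval_subst]
  congr 1
  funext x
  cases hx : β x with
  | none => rfl
  | some s => exact ((hβ.isGround_of_eq_some x s hx).eval_eq w B).trans ((hβ x).2 s hx).2

theorem eq_none_or_exists_evalG_eq (hβ : Assoc w B β) (hβ' : Assoc w B β') (x : ℕ) :
    (β x = none ∧ β' x = none) ∨ ∃ s s', β x = some s ∧ β' x = some s' ∧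
      s.isGround ∧ s'.isGround ∧ s.evalG w = s'.evalG w := by
  have hsome : (β x).isSome ↔ (β' x).isSome := (hβ.isSome_iff x).trans (hβ'.isSome_iff x).symm
  cases hx : β x with
  | none => exact .inl ⟨rfl, by simpa [hx] using hsome⟩
  | some s =>
    obtain ⟨s', hx'⟩ := Option.isSome_iff_exists.1 (hsome.1 (hx ▸ rfl))
    obtain ⟨hs, he⟩ := (hβ x).2 s hx
    obtain ⟨hs', he'⟩ := (hβ' x).2 s' hx'
    exact .inr ⟨s, s', rfl, hx', hs, hs', he.trans he'.symm⟩

theorem unique (hinj : Set.InjOn (Term.evalG w) {t | t.isGround}) (hβ : Assoc w B β)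
    (hβ' : Assoc w B β') : β = β' := by
  funext x
  obtain ⟨hx, hx'⟩ | ⟨s, s', hx, hx', hs, hs', he⟩ := hβ.eq_none_or_exists_evalG_eq hβ' x
  · rw [hx, hx']
  · rw [hx, hx', hinj hs hs' he]

theorem sat_box_iff {X : Sem} {Γ : Set (Formula S)} {φ : Formula S} (hβ : Assoc w B β)
    (h : ∀ β', Assoc w B β' → ((φ.subst β').closed ∧ φ.subst β' ∈ Γ ↔
      (φ.subst β).closed ∧ φ.subst β ∈ Γ)) :
    Sat X w Γ (.box φ) B ↔ (φ.subst β).closed ∧ φ.subst β ∈ Γ := by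
  cases X with
  | any => exact ⟨fun ⟨β', hβ', h'⟩ => (h β' hβ').1 h', fun h' => ⟨β, hβ, h'⟩⟩
  | all => exact ⟨fun h' => h' β hβ, fun h' β' hβ' => (h β' hβ').2 h'⟩

end Assoc

theorem Formula.isGround.sat_box_iff {φ : Formula S} (hφ : φ.isGround) (X : Sem) (w : Interp S)
    (Γ : Set (Formula S)) (B : ℕ → w.U) : Sat X w Γ (.box φ) B ↔ φ ∈ Γ := by
  obtain ⟨β, hβ⟩ := exists_assoc w B
  rw [hβ.sat_box_iff fun β' _ => by rw [hφ.subst_eq, hφ.subst_eq], hφ.subst_eq]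
  exact and_iff_right hφ.closed

end Assoc

/-! ### Truth and belief of program atoms -/

namespace PAtom

variable {S : Sig} {w : Interp S} {B : ℕ → w.U} {β : ℕ → Option (Term S)}

/-- Application of a partial name substitution to an atom; `PAtom.substA` is the total case. -/
def subst (β : ℕ → Option (Term S)) (a : PAtom S) : PAtom S :=
  ⟨a.p, fun i => (a.args i).subst β⟩

/-- Truth of an atom in a structure under a variable assignment. -/
def eval (w : Interp S) (B : ℕ → w.U) (a : PAtom S) : Prop :=
  w.interpP a.p fun i => (a.args i).eval w B

/-- Truth of a ground atom in a structure. -/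
def evalG (w : Interp S) (a : PAtom S) : Prop :=
  w.interpP a.p fun i => (a.args i).evalG w

/-- Truth of the modal atom `𝖫a` in an autoepistemic interpretation under a variable assignment. -/
def Believed (X : Sem) (w : Interp S) (Γ : Set (Formula S)) (B : ℕ → w.U) (a : PAtom S) : Prop :=
  Sat X w Γ (.box a.toFormula) B

theorem isGround.eval_iff {a : PAtom S} (ha : a.isGround) (w : Interp S) (B : ℕ → w.U) :
    a.eval w B ↔ a.evalG w :=
  iff_of_eq <| congrArg (w.interpP a.p) (funext fun i => (ha i).eval_eq w B)

theorem isGround.believed_iff {a : PAtom S} (ha : a.isGround) (X : Sem) (w : Interp S)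
    (Γ : Set (Formula S)) (B : ℕ → w.U) : a.Believed X w Γ B ↔ a.toFormula ∈ Γ :=
  Formula.isGround.sat_box_iff (φ := a.toFormula) ha X w Γ B

theorem substA_eq_subst {σ : ℕ → Term S} {a : PAtom S}
    (h : ∀ x, a.hasVar x → β x = some (σ x)) : a.substA σ = a.subst β :=
  congrArg (PAtom.mk a.p) <| funext fun i => Term.subst_congr fun x hx => (h x ⟨i, hx⟩).symm

theorem isGround_subst_iff (hβ : Assoc w B β) (a : PAtom S) :
    (a.subst β).isGround ↔ ∀ x, a.hasVar x → IsNamed w (B x) := by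
  simp only [isGround, subst, hβ.isGround_subst_iff]
  exact ⟨fun h x ⟨i, hx⟩ => h i x hx, fun h i x hx => h x ⟨i, hx⟩⟩

theorem isGround_substA {σ : ℕ → Term S} {a : PAtom S} (h : ∀ x, a.hasVar x → (σ x).isGround) :
    (a.substA σ).isGround :=
  fun i => (Term.isGround_subst_iff _ _).2 fun x hx => h x ⟨i, hx⟩

theorem eval_subst (hβ : Assoc w B β) (a : PAtom S) : (a.subst β).eval w B ↔ a.eval w B :=
  iff_of_eq <| congrArg (w.interpP a.p) (funext fun i => hβ.eval_subst (a.args i))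

theorem eval_iff_evalG_substA (hβ : Assoc w B β) {σ : ℕ → Term S} {a : PAtom S}
    (h : ∀ x, a.hasVar x → β x = some (σ x)) : a.eval w B ↔ (a.substA σ).evalG w := by
  have hground : (a.substA σ).isGround :=
    isGround_substA fun x hx => hβ.isGround_of_eq_some x _ (h x hx)
  rw [← hground.eval_iff w B, substA_eq_subst h, eval_subst hβ]

theorem believed_iff_mem {X : Sem} {Γ : Set (Formula S)} {a : PAtom S} (hβ : Assoc w B β)
    (ha : (a.subst β).isGround)
    (h : ∀ β', Assoc w B β' → ((a.subst β').toFormula ∈ Γ ↔ (a.subst β).toFormula ∈ Γ)) :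
    a.Believed X w Γ B ↔ (a.subst β).toFormula ∈ Γ := by
  have hclosed (β') (hβ' : Assoc w B β') : (a.subst β').toFormula.closed := by
    rw [isGround_subst_iff hβ] at ha
    exact Formula.isGround.closed (φ := (a.subst β').toFormula) ((isGround_subst_iff hβ' a).2 ha)
  refine (hβ.sat_box_iff fun β' hβ' => ?_).trans (and_iff_right (hclosed β hβ))
  exact and_congr (iff_of_true (hclosed β' hβ') (hclosed β hβ)) (h β' hβ')

end PAtom

/-! ### Unique names -/

section UniqueNames

variable {S : Sig}

/-- Distinct coreferring names over `F` are believed to be equal: the semantic content of the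
unique-names axioms. -/
def UniqueNames (F : Set S.Func) (w : Interp S) (Γ : Set (Formula S)) : Prop :=
  ∀ t₁ t₂ : Term S, t₁.isNameOf F → t₂.isNameOf F → t₁ ≠ t₂ →
    t₁.evalG w = t₂.evalG w → Formula.eq t₁ t₂ ∈ Γ

theorem UniqueNames.of_forall_mem {F F' : Set S.Func} {w : Interp S} {Γ : Set (Formula S)}
    (h : UniqueNames F w Γ) (hF : ∀ f, f ∈ F) : UniqueNames F' w Γ :=
  fun t₁ t₂ h₁ h₂ => h t₁ t₂ (h₁.isGround.isNameOf hF) (h₂.isGround.isNameOf hF)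

theorem modelsT_UNAax_iff (X : Sem) (w : Interp S) (Γ : Set (Formula S)) (Q : Program S) :
    ModelsT X w Γ (UNAax Q) ↔ UniqueNames (progFuncs Q) w Γ := by
  have hsat (t₁ t₂ : Term S) (h₁ : t₁.isGround) (h₂ : t₂.isGround) (B : ℕ → w.U) :
      Sat X w Γ (.imp (.not (.box (.eq t₁ t₂))) (.not (.eq t₁ t₂))) B ↔
        (t₁.evalG w = t₂.evalG w → Formula.eq t₁ t₂ ∈ Γ) := by
    have hbox := Formula.isGround.sat_box_iff (φ := .eq t₁ t₂) ⟨h₁, h₂⟩ X w Γ B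
    rw [← h₁.eval_eq w B, ← h₂.eval_eq w B, ← hbox]
    change ¬ (¬ Sat X w Γ (.box (.eq t₁ t₂)) B ∧ ¬ ¬ t₁.eval w B = t₂.eval w B) ↔ _
    tauto
  constructor
  · intro h t₁ t₂ h₁ h₂ hne
    exact (hsat t₁ t₂ h₁.isGround h₂.isGround fun _ => w.dflt).1
      (h _ ⟨t₁, t₂, h₁, h₂, hne, rfl⟩ _)
  · rintro h _ ⟨t₁, t₂, h₁, h₂, hne, rfl⟩ B
    exact (hsat t₁ t₂ h₁.isGround h₂.isGround B).2 (h t₁ t₂ h₁ h₂ hne)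

variable {X : Sem} {Φ T : Set (Formula S)} {F : Set S.Func} {w : Interp S} {B : ℕ → w.U}
  {β β' : ℕ → Option (Term S)}

theorem StableExp.eval_subst_eq_of_uniqueNames (hT : StableExp X Φ T) (hF : ∀ f, f ∈ F)
    (hw : UniqueNames F w T) (hβ : Assoc w B β) (hβ' : Assoc w B β') {v : Interp S}
    (hv : ModelsT X v T Φ) (C : ℕ → v.U) (t : Term S) :
    (t.subst β).eval v C = (t.subst β').eval v C := by
  rw [Term.eval_subst, Term.eval_subst]
  congr 1
  funext x
  obtain ⟨hx, hx'⟩ | ⟨s, s', hx, hx', hs, hs', he⟩ := hβ.eq_none_or_exists_evalG_eq hβ' x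
  · rw [hx, hx']
  · rw [hx, hx']
    by_cases hne : s = s'
    · rw [hne]
    · have hmem : Formula.eq s s' ∈ T := hw s s' (hs.isNameOf hF) (hs'.isNameOf hF) hne he
      exact (hT.mem_iff _).1 hmem v hv C

theorem StableExp.subst_mem_of_uniqueNames (hT : StableExp X Φ T) (hF : ∀ f, f ∈ F)
    (hw : UniqueNames F w T) (hβ : Assoc w B β) (hβ' : Assoc w B β') {a : PAtom S}
    (ha : (a.subst β).toFormula ∈ T) : (a.subst β').toFormula ∈ T := by
  refine (hT.mem_iff _).2 fun v hv C => ?_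
  have heval := funext fun i => hT.eval_subst_eq_of_uniqueNames hF hw hβ hβ' hv C (a.args i)
  have hsat : v.interpP a.p fun i => ((a.args i).subst β).eval v C := (hT.mem_iff _).1 ha v hv C
  rwa [heval] at hsat

theorem StableExp.believed_iff_mem_of_uniqueNames (hT : StableExp X Φ T) (hF : ∀ f, f ∈ F)
    (hw : UniqueNames F w T) (hβ : Assoc w B β) {Y : Sem} {a : PAtom S}
    (ha : (a.subst β).isGround) : a.Believed Y w T B ↔ (a.subst β).toFormula ∈ T :=
  PAtom.believed_iff_mem hβ ha fun _ hβ' =>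
    ⟨hT.subst_mem_of_uniqueNames hF hw hβ' hβ, hT.subst_mem_of_uniqueNames hF hw hβ hβ'⟩

end UniqueNames

/-! ### Semantics of the embeddings -/

section Connectives

variable {S : Sig} {X : Sem} {w : Interp S} {Γ : Set (Formula S)}

theorem modelsF_uclosure_iff (vs : List ℕ) (φ : Formula S) :
    ModelsF X w Γ (uclosure vs φ) ↔ ModelsF X w Γ φ := by
  induction vs with
  | nil => exact Iff.rfl
  | cons v vs ih =>
    rw [← ih]
    have hall (B : ℕ → w.U) : Sat X w Γ (uclosure (v :: vs) φ) B ↔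
        ∀ u, Sat X w Γ (uclosure vs φ) (Function.update B v u) := not_exists_not
    refine ⟨fun h B => ?_, fun h B => (hall B).2 fun u => h _⟩
    simpa only [Function.update_eq_self] using (hall B).1 (h B) (B v)

theorem sat_andAll_iff (φ : Formula S) (l : List (Formula S)) (B : ℕ → w.U) :
    Sat X w Γ (andAll φ l) B ↔ Sat X w Γ φ B ∧ ∀ ψ ∈ l, Sat X w Γ ψ B := by
  induction l generalizing φ with
  | nil => simp [andAll]
  | cons ψ l ih => simp only [andAll, ih, Sat, List.forall_mem_cons, and_assoc]

theorem sat_orAll_iff (φ : Formula S) (l : List (Formula S)) (B : ℕ → w.U) :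
    Sat X w Γ (orAll φ l) B ↔ Sat X w Γ φ B ∨ ∃ ψ ∈ l, Sat X w Γ ψ B := by
  induction l generalizing φ with
  | nil => simp [orAll]
  | cons ψ l ih =>
    simp only [orAll, ih, Formula.or, Sat, List.exists_mem_cons_iff, not_and_or, not_not, or_assoc]

theorem sat_impOf_iff (l : List (Formula S)) (φ : Formula S) (B : ℕ → w.U) :
    Sat X w Γ (impOf l φ) B ↔ ((∀ ψ ∈ l, Sat X w Γ ψ B) → Sat X w Γ φ B) := by
  cases l with
  | nil => simp [impOf]
  | cons ψ l =>
    simp only [impOf, Formula.imp, Sat, sat_andAll_iff, List.forall_mem_cons, not_and_not_right]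

theorem sat_disjOf_iff {l : List (Formula S)} (hl : l ≠ []) (B : ℕ → w.U) :
    Sat X w Γ (disjOf l) B ↔ ∃ ψ ∈ l, Sat X w Γ ψ B := by
  cases l with
  | nil => exact absurd rfl hl
  | cons ψ l => simp only [disjOf, sat_orAll_iff, List.exists_mem_cons_iff]

theorem modelsF_clause_iff (vs : List ℕ) (body : List (Formula S)) {head : List (Formula S)}
    (hhead : head ≠ []) :
    ModelsF X w Γ (uclosure vs (impOf body (disjOf head))) ↔
      ∀ B, (∀ ψ ∈ body, Sat X w Γ ψ B) → ∃ ψ ∈ head, Sat X w Γ ψ B := by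
  rw [modelsF_uclosure_iff]
  exact forall_congr' fun B => by rw [sat_impOf_iff, sat_disjOf_iff hhead]

theorem boxAtomic_uclosure {φ : Formula S} (hφ : φ.boxAtomic) (vs : List ℕ) :
    (uclosure vs φ).boxAtomic := by
  induction vs with
  | nil => exact hφ
  | cons _ _ ih => exact ih

theorem boxAtomic_andAll {φ : Formula S} {l : List (Formula S)} (hφ : φ.boxAtomic)
    (hl : ∀ ψ ∈ l, ψ.boxAtomic) : (andAll φ l).boxAtomic := by
  induction l generalizing φ with
  | nil => exact hφ
  | cons ψ l ih =>
    rw [List.forall_mem_cons] at hl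
    exact ih ⟨hφ, hl.1⟩ hl.2

theorem boxAtomic_orAll {φ : Formula S} {l : List (Formula S)} (hφ : φ.boxAtomic)
    (hl : ∀ ψ ∈ l, ψ.boxAtomic) : (orAll φ l).boxAtomic := by
  induction l generalizing φ with
  | nil => exact hφ
  | cons ψ l ih =>
    rw [List.forall_mem_cons] at hl
    exact ih ⟨hφ, hl.1⟩ hl.2

theorem boxAtomic_clause (vs : List ℕ) {body head : List (Formula S)}
    (hbody : ∀ ψ ∈ body, ψ.boxAtomic) (hhead : ∀ ψ ∈ head, ψ.boxAtomic) :
    (uclosure vs (impOf body (disjOf head))).boxAtomic := by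
  have hdisj : (disjOf head).boxAtomic := by
    cases head with
    | nil => exact trivial
    | cons ψ l => exact boxAtomic_orAll (hhead ψ (.head l)) fun χ hχ => hhead χ (.tail ψ hχ)
  refine boxAtomic_uclosure ?_ vs
  cases body with
  | nil => exact hdisj
  | cons ψ l =>
    exact ⟨boxAtomic_andAll (hbody ψ (.head l)) fun χ hχ => hbody χ (.tail ψ hχ), hdisj⟩

end Connectives

namespace Rule

variable {S : Sig} {lb lh : Prop} {A A' K K' : PAtom S → Prop} {r : Rule S}

/-- Satisfaction of a rule when `A` is the set of true atoms and `K` the set of believed atoms.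
The flags `lb` and `lh` tell whether positive body atoms, respectively head atoms, have to be
believed as well as true; the embeddings HP, EB and EH are the cases `(False, False)`,
`(True, False)` and `(True, True)`. -/
def Holds (lb lh : Prop) (A K : PAtom S → Prop) (r : Rule S) : Prop :=
  (∀ b ∈ r.pos, A b ∧ (lb → K b)) → (∀ c ∈ r.neg, ¬ K c) → ∃ h ∈ r.head, A h ∧ (lh → K h)

theorem mem_atoms_of_mem_head {a : PAtom S} (ha : a ∈ r.head) : a ∈ r.atoms :=
  List.mem_append_left _ (List.mem_append_left _ ha)

theorem mem_atoms_of_mem_pos {a : PAtom S} (ha : a ∈ r.pos) : a ∈ r.atoms :=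
  List.mem_append_left _ (List.mem_append_right _ ha)

theorem mem_atoms_of_mem_neg {a : PAtom S} (ha : a ∈ r.neg) : a ∈ r.atoms :=
  List.mem_append_right _ ha

/-- Negative body atoms and head atoms are monotone in the beliefs; only the flag `lb` makes a rule
antitone in them. -/
theorem Holds.mono (h : r.Holds lb lh A K) (hA : ∀ a ∈ r.atoms, (A a ↔ A' a))
    (hK : ∀ a ∈ r.atoms, K a → K' a) (hK' : lb → ∀ a ∈ r.atoms, K' a → K a) :
    r.Holds lb lh A' K' := by
  intro hpos hneg
  have hpos' (b) (hb : b ∈ r.pos) : A b ∧ (lb → K b) :=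
    have hb' := mem_atoms_of_mem_pos hb
    ⟨(hA b hb').2 (hpos b hb).1, fun hlb => hK' hlb b hb' ((hpos b hb).2 hlb)⟩
  have hneg' (c) (hc : c ∈ r.neg) : ¬ K c := fun hKc =>
    hneg c hc (hK c (mem_atoms_of_mem_neg hc) hKc)
  obtain ⟨a, ha, hAa, hKa⟩ := h hpos' hneg'
  have ha' := mem_atoms_of_mem_head ha
  exact ⟨a, ha, (hA a ha').1 hAa, fun hlh => hK a ha' (hKa hlh)⟩

theorem holds_congr (hA : ∀ a ∈ r.atoms, (A a ↔ A' a)) (hK : ∀ a ∈ r.atoms, (K a ↔ K' a)) :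
    r.Holds lb lh A K ↔ r.Holds lb lh A' K' :=
  ⟨fun h => h.mono hA (fun a ha => (hK a ha).1) fun _ a ha => (hK a ha).2,
    fun h => h.mono (fun a ha => (hA a ha).symm) (fun a ha => (hK a ha).2)
      fun _ a ha => (hK a ha).1⟩

theorem holds_applySubst_iff (σ : ℕ → Term S) :
    (r.applySubst σ).Holds lb lh A K ↔
      r.Holds lb lh (fun a => A (a.substA σ)) (fun a => K (a.substA σ)) := by
  simp only [Holds, applySubst, List.mem_map, forall_exists_index, and_imp,
    forall_apply_eq_imp_iff₂, exists_exists_and_eq_and]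

end Rule

section Embeddings

variable {S : Sig} {una lb lh : Prop}

/-- The formula `emb r` expresses satisfaction of `r` with belief flags `lb` and `lh`, applying `𝖫`
to atoms only. -/
structure IsRuleEmbedding (emb : Rule S → Formula S) (lb lh : Prop) : Prop where
  boxAtomic : ∀ r, (emb r).boxAtomic
  modelsF_iff : ∀ (X : Sem) (w : Interp S) (Γ : Set (Formula S)) (r : Rule S), r.head ≠ [] →
    (ModelsF X w Γ (emb r) ↔
      ∀ B, r.Holds lb lh (PAtom.eval w B) (PAtom.Believed X w Γ B))

theorem isRuleEmbedding_embHP : IsRuleEmbedding (S := S) embHP False False where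
  boxAtomic r := boxAtomic_clause r.vars (by simp [bodyHP, Formula.boxAtomic, PAtom.toFormula,
    Formula.isAtomic, or_imp, forall_and]) (by simp [Formula.boxAtomic, PAtom.toFormula])
  modelsF_iff X w Γ r hr := by
    rw [embHP, modelsF_clause_iff _ _ (mt List.map_eq_nil_iff.1 hr)]
    simp only [bodyHP, List.forall_mem_append, List.mem_map, forall_exists_index, and_imp,
      forall_apply_eq_imp_iff₂, exists_exists_and_eq_and, Rule.Holds, false_imp_iff, and_true]
    exact Iff.rfl

theorem isRuleEmbedding_embEB : IsRuleEmbedding (S := S) embEB True False where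
  boxAtomic r := boxAtomic_clause r.vars (by simp [bodyE, Formula.boxAtomic, PAtom.toFormula,
    Formula.isAtomic, or_imp, forall_and]) (by simp [Formula.boxAtomic, PAtom.toFormula])
  modelsF_iff X w Γ r hr := by
    rw [embEB, modelsF_clause_iff _ _ (mt List.map_eq_nil_iff.1 hr)]
    simp only [bodyE, List.forall_mem_append, List.mem_map, forall_exists_index, and_imp,
      forall_apply_eq_imp_iff₂, exists_exists_and_eq_and, Rule.Holds, false_imp_iff, true_imp_iff,
      and_true]
    exact Iff.rfl

theorem isRuleEmbedding_embEH : IsRuleEmbedding (S := S) embEH True True where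
  boxAtomic r := boxAtomic_clause r.vars (by simp [bodyE, Formula.boxAtomic, PAtom.toFormula,
    Formula.isAtomic, or_imp, forall_and]) (by simp [Formula.boxAtomic, PAtom.toFormula,
    Formula.isAtomic])
  modelsF_iff X w Γ r hr := by
    rw [embEH, modelsF_clause_iff _ _ (mt List.map_eq_nil_iff.1 hr)]
    simp only [bodyE, List.forall_mem_append, List.mem_map, forall_exists_index, and_imp,
      forall_apply_eq_imp_iff₂, exists_exists_and_eq_and, Rule.Holds, true_imp_iff]
    exact Iff.rfl

/-- `⟨w, Γ⟩` satisfies the rules of the program `Q`, with belief flags as in `Rule.Holds`, and, if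
`una` is set, the unique-names axioms of `Q`. -/
def IsModel (una lb lh : Prop) (X : Sem) (w : Interp S) (Γ : Set (Formula S)) (Q : Program S) :
    Prop :=
  (∀ r ∈ Q, ∀ B, r.Holds lb lh (PAtom.eval w B) (PAtom.Believed X w Γ B)) ∧
    (una → UniqueNames (progFuncs Q) w Γ)

/-- The models of the theory `Φ` are those of the program `Q` in the sense of `IsModel`, and `𝖫` is
applied in `Φ` to atoms only. -/
structure Axiomatizes (una lb lh : Prop) (Φ : Set (Formula S)) (Q : Program S) : Prop where
  boxAtomic : ∀ φ ∈ Φ, φ.boxAtomic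
  modelsT_iff : ∀ (X : Sem) (w : Interp S) (Γ : Set (Formula S)),
    ModelsT X w Γ Φ ↔ IsModel una lb lh X w Γ Q

variable {emb : Rule S → Formula S} {Q : Program S}

theorem IsRuleEmbedding.axiomatizes (hemb : IsRuleEmbedding emb lb lh)
    (hQ : ∀ r ∈ Q, r.head ≠ []) : Axiomatizes False lb lh (ruleEmb emb Q) Q where
  boxAtomic := fun _ ⟨r, _, hφ⟩ => hφ ▸ hemb.boxAtomic r
  modelsT_iff X w Γ := by
    have hrules : ModelsT X w Γ (ruleEmb emb Q) ↔ ∀ r ∈ Q, ModelsF X w Γ (emb r) :=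
      ⟨fun h r hr => h _ ⟨r, hr, rfl⟩, fun h _ ⟨r, hr, hφ⟩ => hφ ▸ h r hr⟩
    rw [hrules, IsModel, false_imp_iff, and_true]
    exact forall₂_congr fun r hr => hemb.modelsF_iff X w Γ r (hQ r hr)

theorem Axiomatizes.union_UNAax {Φ : Set (Formula S)} (hΦ : Axiomatizes False lb lh Φ Q) :
    Axiomatizes True lb lh (Φ ∪ UNAax Q) Q where
  boxAtomic := by
    rintro φ (hφ | ⟨t₁, t₂, _, _, _, rfl⟩)
    · exact hΦ.boxAtomic φ hφ
    · exact ⟨trivial, trivial⟩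
  modelsT_iff X w Γ := by
    have hunion : ModelsT X w Γ (Φ ∪ UNAax Q) ↔ ModelsT X w Γ Φ ∧ ModelsT X w Γ (UNAax Q) :=
      forall₂_or_left
    rw [hunion, hΦ.modelsT_iff, modelsT_UNAax_iff]
    simp only [IsModel, false_imp_iff, true_imp_iff, and_true]

end Embeddings

/-! ### Models of a program and of its grounding -/

section Grounding

variable {S : Sig} {P : Program S} {una lb lh : Prop} {X : Sem} {w v : Interp S}
  {Γ Φ T : Set (Formula S)}

theorem head_ne_nil_of_mem_grP (hP : ∀ r ∈ P, r.head ≠ []) {r : Rule S} (hr : r ∈ grP P) :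
    r.head ≠ [] := by
  obtain ⟨r, hr, σ, _, rfl⟩ := hr
  exact mt List.map_eq_nil_iff.1 (hP r hr)

theorem Rule.holds_applySubst_iff_mem {r : Rule S} {σ : ℕ → Term S}
    (hσ : ∀ x, r.hasVar x → (σ x).isGround) (B : ℕ → w.U) :
    (r.applySubst σ).Holds lb lh (PAtom.eval w B) (PAtom.Believed X w Γ B) ↔
      r.Holds lb lh (fun a => (a.substA σ).evalG w) (fun a => (a.substA σ).toFormula ∈ Γ) := by
  have hground (a) (ha : a ∈ r.atoms) : (a.substA σ).isGround :=
    PAtom.isGround_substA fun x hx => hσ x ⟨a, ha, hx⟩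
  rw [Rule.holds_applySubst_iff]
  exact Rule.holds_congr (fun a ha => (hground a ha).eval_iff w B)
    fun a ha => (hground a ha).believed_iff X w Γ B

theorem forall_mem_grP_holds_iff :
    (∀ r ∈ grP P, ∀ B, r.Holds lb lh (PAtom.eval w B) (PAtom.Believed X w Γ B)) ↔
      ∀ r ∈ P, ∀ σ : ℕ → Term S, (∀ x, r.hasVar x → (σ x).isNameOf (progFuncs P)) →
        r.Holds lb lh (fun a => (a.substA σ).evalG w) (fun a => (a.substA σ).toFormula ∈ Γ) := by
  constructor
  · intro h r hr σ hσ
    exact (Rule.holds_applySubst_iff_mem (fun x hx => (hσ x hx).isGround) _).1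
      (h _ ⟨r, hr, σ, hσ, rfl⟩ fun _ => w.dflt)
  · rintro h _ ⟨r, hr, σ, hσ, rfl⟩ B
    exact (Rule.holds_applySubst_iff_mem (fun x hx => (hσ x hx).isGround) B).2 (h r hr σ hσ)

theorem IsModel.grP (hu : una ∨ X = .all ∧ ¬ lb) (hP : ∀ f, f ∈ progFuncs P)
    (hT : StableExp X Φ T) (hw : IsModel una lb lh X w T P) : IsModel una lb lh X w T (grP P) := by
  refine ⟨forall_mem_grP_holds_iff.2 fun r hr σ hσ => ?_, fun h => (hw.2 h).of_forall_mem hP⟩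
  obtain ⟨β, hβ, hβσ⟩ := exists_assoc_evalG w σ
  have hsubst (a) (ha : a ∈ r.atoms) (x) (hx : a.hasVar x) : β x = some (σ x) :=
    hβσ x (hσ x ⟨a, ha, hx⟩).isGround
  have hrule := hw.1 r hr fun x => (σ x).evalG w
  have htrue (a) (ha : a ∈ r.atoms) := PAtom.eval_iff_evalG_substA hβ (hsubst a ha)
  rcases hu with huna | ⟨rfl, hlb⟩
  · refine (Rule.holds_congr htrue fun a ha => ?_).1 hrule
    have hground : (a.substA σ).isGround :=
      PAtom.isGround_substA fun x hx => (hσ x ⟨a, ha, hx⟩).isGround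
    rw [PAtom.substA_eq_subst (hsubst a ha)] at hground ⊢
    exact hT.believed_iff_mem_of_uniqueNames hP (hw.2 huna) hβ hground
  · refine hrule.mono htrue (fun a ha hK => ?_) fun h => absurd h hlb
    rw [PAtom.substA_eq_subst (hsubst a ha)]
    exact (hK β hβ).2

/-- The structure on the set of ground terms that satisfies the same ground atoms as `w`; the ground
term `t₀` witnesses that its domain is nonempty. -/
def Interp.herbrand (w : Interp S) (t₀ : Term S) (ht₀ : t₀.isGround) : Interp S where
  U := {t : Term S // t.isGround}
  nonempty := ⟨⟨t₀, ht₀⟩⟩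
  interpF f ts := ⟨.func f fun i => (ts i).1, fun i => (ts i).2⟩
  interpP p ts := w.interpP p fun i => (ts i).1.evalG w

theorem Interp.evalG_herbrand {t₀ : Term S} (ht₀ : t₀.isGround) {t : Term S} (ht : t.isGround) :
    (t.evalG (w.herbrand t₀ ht₀)) = ⟨t, ht⟩ := by
  induction t with
  | var _ => exact ht.elim
  | func f ts ih => exact congrArg ((w.herbrand t₀ ht₀).interpF f) (funext fun i => ih i (ht i))

/-- `v` satisfies the same ground atoms as `w`, but interprets distinct names distinctly and has no
individuals without a name, except possibly if `P` is variable-free. -/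
structure IsHerbrandUnfolding (P : Program S) (w v : Interp S) : Prop where
  injOn : Set.InjOn (Term.evalG v) {t | t.isGround}
  isNamed : ∀ r ∈ P, ∀ x, r.hasVar x → ∀ k : v.U, IsNamed v k
  evalG_iff : ∀ a : PAtom S, a.isGround → (a.evalG v ↔ a.evalG w)

theorem Interp.isHerbrandUnfolding_herbrand {t₀ : Term S} (ht₀ : t₀.isGround) :
    IsHerbrandUnfolding P w (w.herbrand t₀ ht₀) where
  injOn t₁ h₁ t₂ h₂ h := by
    rw [evalG_herbrand ht₀ h₁, evalG_herbrand ht₀ h₂] at h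
    exact congrArg Subtype.val h
  isNamed _ _ _ _ k := ⟨k.1, k.2, evalG_herbrand ht₀ k.2⟩
  evalG_iff a ha := iff_of_eq <| congrArg (w.interpP a.p) <| funext fun i =>
    congrArg (fun t => Term.evalG w t.1) (evalG_herbrand ht₀ (ha i))

theorem exists_isGround_of_hasVar (hgood : goodSig P) {r : Rule S} (hr : r ∈ P) {x : ℕ}
    (hx : r.hasVar x) : ∃ t : Term S, t.isGround := by
  obtain ⟨a, ha, i, _⟩ := hx
  obtain ⟨f, _, hf⟩ := hgood ⟨a.p, ⟨r, hr, a, ha, rfl⟩, i.pos⟩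
  have : IsEmpty (Fin (S.arF f)) := hf ▸ Fin.isEmpty
  exact ⟨.func f isEmptyElim, isEmptyElim⟩

theorem exists_isHerbrandUnfolding (hgood : goodSig P) (w : Interp S) :
    ∃ v, IsHerbrandUnfolding P w v := by
  by_cases h : ∃ t : Term S, t.isGround
  · obtain ⟨t₀, ht₀⟩ := h
    exact ⟨_, Interp.isHerbrandUnfolding_herbrand ht₀⟩
  · exact ⟨w, fun t ht => (h ⟨t, ht⟩).elim,
      fun r hr x hx => (h (exists_isGround_of_hasVar hgood hr hx)).elim, fun _ _ => Iff.rfl⟩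

namespace IsHerbrandUnfolding

theorem modelsF_of_modelsF (hv : IsHerbrandUnfolding P w v) {φ : Formula S} (hg : φ.isGround)
    (ha : φ.isAtomic) (h : ModelsF X v Γ φ) : ModelsF X w Γ φ := by
  intro B
  have hsat := h fun _ => v.dflt
  cases φ with
  | atom p ts =>
    have hground : (PAtom.mk p ts).isGround := hg
    exact (hground.eval_iff w B).2 ((hv.evalG_iff _ hground).1 hsat)
  | eq t₁ t₂ => exact congrArg (Term.eval w B) (hv.injOn hg.1 hg.2 hsat)
  | _ => exact ha.elim

theorem isModel (hv : IsHerbrandUnfolding P w v) (hP : ∀ f, f ∈ progFuncs P)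
    (hw : IsModel una lb lh X w Γ (grP P)) : IsModel una lb lh X v Γ P := by
  refine ⟨fun r hr B => ?_, fun _ t₁ t₂ h₁ h₂ hne he =>
    absurd (hv.injOn h₁.isGround h₂.isGround he) hne⟩
  obtain ⟨β, hβ⟩ := exists_assoc v B
  let σ (x : ℕ) : Term S := (β x).getD (.var x)
  have hσ (x) (hx : r.hasVar x) : (σ x).isGround :=
    (hβ.isGround_getD_iff x).2 (hv.isNamed r hr x hx (B x))
  have hsubst (a) (ha : a ∈ r.atoms) (x) (hx : a.hasVar x) : β x = some (σ x) := by
    have hsome := (hβ.isSome_iff x).2 (hv.isNamed r hr x ⟨a, ha, hx⟩ (B x))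
    exact (Option.getD_of_ne_none (Option.isSome_iff_ne_none.1 hsome) _).symm
  have hground (a) (ha : a ∈ r.atoms) : (a.substA σ).isGround :=
    PAtom.isGround_substA fun x hx => hσ x ⟨a, ha, hx⟩
  have hrule := forall_mem_grP_holds_iff.1 hw.1 r hr σ fun x hx => (hσ x hx).isNameOf hP
  refine (Rule.holds_congr (fun a ha => ?_) fun a ha => ?_).2 hrule
  · rw [PAtom.eval_iff_evalG_substA hβ (hsubst a ha), hv.evalG_iff _ (hground a ha)]
  · have hg := hground a ha
    rw [PAtom.substA_eq_subst (hsubst a ha)] at hg ⊢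
    exact PAtom.believed_iff_mem hβ hg fun β' hβ' => by rw [hβ'.unique hv.injOn hβ]

end IsHerbrandUnfolding

variable {Φ₁ Φ₂ : Set (Formula S)}

theorem Axiomatizes.entails_grP_iff (hΦ₁ : Axiomatizes una lb lh Φ₁ (grP P))
    (hΦ₂ : Axiomatizes una lb lh Φ₂ P) (hu : una ∨ X = .all ∧ ¬ lb)
    (hP : ∀ f, f ∈ progFuncs P) (hgood : goodSig P) (hT : StableExp X Φ T) {φ : Formula S}
    (hg : φ.isGround) (ha : φ.isAtomic) : Entails X Φ₁ T φ ↔ Entails X Φ₂ T φ := by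
  constructor
  · intro h w hw
    exact h w <| (hΦ₁.modelsT_iff X w T).2 (((hΦ₂.modelsT_iff X w T).1 hw).grP hu hP hT)
  · intro h w hw
    obtain ⟨v, hv⟩ := exists_isHerbrandUnfolding hgood w
    have hvmodel := hv.isModel hP ((hΦ₁.modelsT_iff X w T).1 hw)
    exact hv.modelsF_of_modelsF hg ha (h v ((hΦ₂.modelsT_iff X v T).2 hvmodel))

theorem Axiomatizes.expEquivSel_ogaOf_grP (hΦ₁ : Axiomatizes una lb lh Φ₁ (grP P))
    (hΦ₂ : Axiomatizes una lb lh Φ₂ P) (hu : una ∨ X = .all ∧ ¬ lb)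
    (hP : ∀ f, f ∈ progFuncs P) (hgood : goodSig P) : ExpEquivSel X ogaOf Φ₁ Φ₂ := by
  refine ⟨fun T hT => ?_, fun T hT => ?_⟩
  · exact hT.exists_ogaOf_eq hΦ₂.boxAtomic fun φ => hΦ₁.entails_grP_iff hΦ₂ hu hP hgood hT
  · obtain ⟨T', hT', h⟩ := hT.exists_ogaOf_eq hΦ₁.boxAtomic fun φ hg ha =>
      (hΦ₁.entails_grP_iff hΦ₂ hu hP hgood hT hg ha).symm
    exact ⟨T', hT', h.symm⟩

end Grounding

section Reduction

variable {S : Sig} {P : Program S} {lb lh : Prop} {emb : Rule S → Formula S}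

theorem IsRuleEmbedding.expEquivSel_union_UNAax (hemb : IsRuleEmbedding emb lb lh) (X : Sem)
    (hhead : ∀ r ∈ P, r.head ≠ []) (hP : ∀ f, f ∈ progFuncs P) (hgood : goodSig P) :
    ExpEquivSel X ogaOf (ruleEmb emb (grP P) ∪ UNAax (grP P)) (ruleEmb emb P ∪ UNAax P) :=
  (hemb.axiomatizes fun _ => head_ne_nil_of_mem_grP hhead).union_UNAax.expEquivSel_ogaOf_grP
    (hemb.axiomatizes hhead).union_UNAax (.inl trivial) hP hgood

theorem IsRuleEmbedding.expEquivSel_all (hemb : IsRuleEmbedding emb lb lh) (hlb : ¬ lb)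
    (hhead : ∀ r ∈ P, r.head ≠ []) (hP : ∀ f, f ∈ progFuncs P) (hgood : goodSig P) :
    ExpEquivSel .all ogaOf (ruleEmb emb (grP P)) (ruleEmb emb P) :=
  (hemb.axiomatizes fun _ => head_ne_nil_of_mem_grP hhead).expEquivSel_ogaOf_grP
    (hemb.axiomatizes hhead) (.inr ⟨rfl, hlb⟩) hP hgood

end Reduction

theorem stmt2_general {S : Sig} (X : Sem) (P : Program S) (hhead : ∀ r ∈ P, r.head ≠ [])
    (hP : ∀ f, f ∈ progFuncs P) (hgood : goodSig P) (τ : Program S → Set (Formula S))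
    (hτ : τ = tauHP ∨ τ = tauEB ∨ τ = tauEH) :
    ExpEquivSel X ogaOf (τ (grP P)) (τ P) ∧
      ExpEquivSel .all ogaOf (tauHPminus (grP P)) (tauHPminus P) := by
  refine ⟨?_, isRuleEmbedding_embHP.expEquivSel_all not_false hhead hP hgood⟩
  rcases hτ with rfl | rfl | rfl
  · exact isRuleEmbedding_embHP.expEquivSel_union_UNAax X hhead hP hgood
  · exact isRuleEmbedding_embEB.expEquivSel_union_UNAax X hhead hP hgood
  · exact isRuleEmbedding_embEH.expEquivSel_union_UNAax X hhead hP hgood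

/-- Reduction lemma: `τ_χ(P)` has a stableˣ expansion `T` iff
`τ_χ(gr(P))` has a stableˣ expansion `T'` with `T'_oga = T_oga`; the same holds
for `τ⁻_HP` and stableᴬ expansions. -/
theorem stmt2 {S : Sig} (X : Sem) (P : Program S)
    (hwf : progWf P) (hnormal : progNormal P) (hfull : fullSig P) (hgood : goodSig P)
    (τ : Program S → Set (Formula S))
    (hτ : τ = tauHP ∨ τ = tauEB ∨ τ = tauEH) :
    ((∀ T, StableExp X (τ P) T →
        ∃ T', StableExp X (τ (grP P)) T' ∧ ogaOf T' = ogaOf T) ∧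
     (∀ T', StableExp X (τ (grP P)) T' →
        ∃ T, StableExp X (τ P) T ∧ ogaOf T' = ogaOf T)) ∧
    ((∀ T, StableExp Sem.all (tauHPminus P) T →
        ∃ T', StableExp Sem.all (tauHPminus (grP P)) T' ∧ ogaOf T' = ogaOf T) ∧
     (∀ T', StableExp Sem.all (tauHPminus (grP P)) T' →
        ∃ T, StableExp Sem.all (tauHPminus P) T ∧ ogaOf T' = ogaOf T)) := by
  obtain ⟨hτP, hHP⟩ := stmt2_general X P (fun r hr => (hwf r hr).1) hfull.1 hgood τ hτ
  exact ⟨And.symm hτP, And.symm hHP⟩
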